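/- arXiv:1203.4026 — 4 statements merged into one kernel-verified Lean document; each statement's English description precedes it below -/
import Mathlib

section
/- The axiom of symmetry AS is equivalent to the negation of the continuum hypothesis: AS holds if and only if the cardinality of the continuum is not equal to ℵ₁. -/
open Cardinal

/-- A type of cardinality `ℵ₁` carries an assignment of countable sets such that of any two points,
one lies in the set assigned to the other. -/
theorem exists_countable_assignment_of_mk_eq_aleph_one {α : Type*} (h : #α = aleph 1) :
    ∃ f : α → Set α, (∀ x, (f x).Countable) ∧ ∀ x y, y ∈ f x ∨ x ∈ f y := by
  obtain ⟨e⟩ : Nonempty (α ≃ (aleph 1).ord.ToType) := Cardinal.eq.mp (by simpa using h)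
  refine ⟨fun x ↦ e ⁻¹' Set.Iic (e x), fun x ↦ ?_, fun x y ↦ le_total (e y) (e x)⟩
  refine Set.Countable.preimage_of_injOn ?_ e.injective.injOn
  have hlt : #(Set.Iio (e x)) < aleph 1 := by simpa using mk_Iio_lt (e x) (by simp)
  have hIio : (Set.Iio (e x)).Countable := by
    rwa [← le_aleph0_iff_set_countable, ← Order.lt_succ_iff, succ_aleph0]
  rw [← Set.Iio_insert]
  exact hIio.insert _

/-- If `α` has cardinality greater than `ℵ₁`, then for every assignment of countable sets there are
two points neither of which lies in the set assigned to the other. -/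
theorem exists_notMem_and_notMem_of_aleph_one_lt_mk {α : Type*} (h : aleph 1 < #α)
    {f : α → Set α} (hf : ∀ x, (f x).Countable) : ∃ x y, y ∉ f x ∧ x ∉ f y := by
  obtain ⟨A, hA⟩ := le_mk_iff_exists_set.mp h.le
  have hU : #(⋃ x : A, f x) < #α := by
    refine lt_of_le_of_lt ?_ h
    calc #(⋃ x : A, f x) ≤ #A * ⨆ x : A, #(f x) := mk_iUnion_le _
      _ ≤ aleph 1 * ℵ₀ := by
        rw [hA]
        gcongr
        exact ciSup_le' fun x ↦ (hf x).le_aleph0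
      _ = aleph 1 := mul_aleph0_eq (aleph0_le_aleph 1)
  obtain ⟨y, hy⟩ : ∃ y, y ∉ ⋃ x : A, f x := by
    by_contra! hall
    rw [Set.eq_univ_of_forall hall, mk_univ] at hU
    exact hU.false
  obtain ⟨x, hxA, hxy⟩ : ∃ x ∈ A, x ∉ f y := by
    by_contra! hsub
    have hle := ((hf y).mono hsub).le_aleph0
    rw [hA] at hle
    exact (aleph0_lt_aleph_one.trans_le hle).false
  exact ⟨x, y, fun hyx ↦ hy (Set.mem_iUnion.mpr ⟨⟨x, hxA⟩, hyx⟩), hxy⟩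

/-- The axiom of symmetry is equivalent to the negation of the continuum hypothesis. -/
theorem axiom_of_symmetry_iff_not_CH :
    (∀ f : ℝ → Set ℝ, (∀ x, (f x).Countable) →
      ∃ x y : ℝ, y ∉ f x ∧ x ∉ f y) ↔ #ℝ ≠ aleph 1 := by
  refine ⟨fun hAS hCH ↦ ?_, fun hCH f hf ↦ ?_⟩
  · obtain ⟨f, hf, hfxy⟩ := exists_countable_assignment_of_mk_eq_aleph_one hCH
    obtain ⟨x, y, hyx, hxy⟩ := hAS f hf
    exact (hfxy x y).elim hyx hxy
  · refine exists_notMem_and_notMem_of_aleph_one_lt_mk (lt_of_le_of_ne ?_ hCH.symm) hf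
    rw [mk_real]
    exact aleph_one_le_continuum
end

section
/- If the continuum hypothesis holds, then the axiom of symmetry fails; indeed there exists a function f mapping each real number to a countable set of real numbers such that for all real numbers x and y, either x ∈ f(y) or y ∈ f(x). -/
open Cardinal

/-- If CH holds, then the axiom of symmetry fails: there is a function assigning to each
real a countable set of reals such that any two reals `x`, `y` satisfy `x ∈ f y` or `y ∈ f x`. -/
theorem CH_implies_not_axiom_of_symmetry (hCH : #ℝ = aleph 1) :
    ∃ f : ℝ → Set ℝ, (∀ x, (f x).Countable) ∧ ∀ x y : ℝ, x ∈ f y ∨ y ∈ f x := by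
  obtain ⟨r, _, hr⟩ := exists_ord_eq ℝ
  refine ⟨fun x => insert x {y | r y x}, fun x => ?_, fun x y => ?_⟩
  · refine Set.Countable.insert x (le_aleph0_iff_set_countable.1 ?_)
    have h := card_typein_lt x hr
    rwa [hCH, ← succ_aleph0, Order.lt_succ_iff] at h
  · rcases trichotomous_of r x y with h | h | h
    · exact Or.inl (Or.inr h)
    · exact Or.inl (Or.inl h)
    · exact Or.inr (Or.inr h)
end

section
/- If the continuum hypothesis fails, then the axiom of symmetry holds: for every function f mapping each real number to a countable set of real numbers, there exist real numbers x and y such that y ∉ f(x) and x ∉ f(y). -/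
open Cardinal

/-- A type with more than `ℵ₁` elements has, for each assignment of countable sets to its points,
two points neither of which lies in the set assigned to the other. -/
theorem exists_notMem_and_notMem_of_aleph_one_lt {α : Type*} (hα : aleph 1 < #α)
    (f : α → Set α) (hf : ∀ x, (f x).Countable) : ∃ x y, y ∉ f x ∧ x ∉ f y := by
  obtain ⟨s, hs⟩ := le_mk_iff_exists_set.1 hα.le
  have hU : #(⋃ x ∈ s, f x) ≤ aleph 1 := calc
    #(⋃ x ∈ s, f x) ≤ #s * ⨆ x : s, #(f x) := mk_biUnion_le f s
    _ ≤ aleph 1 * ℵ₀ := by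
      rw [hs]
      gcongr
      exact ciSup_le' fun x => (hf x).le_aleph0
    _ = aleph 1 := mul_aleph0_eq (aleph0_le_aleph 1)
  obtain ⟨y, hy⟩ : ∃ y, y ∉ ⋃ x ∈ s, f x := by
    by_contra! h
    rw [Set.eq_univ_of_forall h, mk_univ] at hU
    exact hU.not_gt hα
  obtain ⟨x, hxs, hxy⟩ : ∃ x ∈ s, x ∉ f y := by
    by_contra! h
    have hle := le_aleph0_iff_set_countable.2 ((hf y).mono h)
    rw [hs] at hle
    exact hle.not_gt aleph0_lt_aleph_one
  exact ⟨x, y, fun h => hy (Set.mem_biUnion hxs h), hxy⟩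

/-- If CH fails, then the axiom of symmetry holds. -/
theorem not_CH_implies_axiom_of_symmetry (hCH : #ℝ ≠ aleph 1) :
    ∀ f : ℝ → Set ℝ, (∀ x, (f x).Countable) → ∃ x y : ℝ, y ∉ f x ∧ x ∉ f y := by
  refine exists_notMem_and_notMem_of_aleph_one_lt (lt_of_le_of_ne ?_ hCH.symm)
  rw [mk_real]
  exact aleph_one_le_continuum
end

section
/- If the continuum hypothesis holds, then there exists a set S of pairs of real numbers from the unit interval (a subset of [0,1] × [0,1]) such that for every y ∈ [0,1] the horizontal section {x ∈ [0,1] : (x,y) ∈ S} is countable, and for every x ∈ [0,1] the complement in [0,1] of the vertical section {y ∈ [0,1] : (x,y) ∈ S} is countable. -/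
open Cardinal

/-- A type of cardinality `ℵ₁` carries a well-order all of whose initial segments are countable. -/
theorem exists_isWellOrder_countable_initialSegment {α : Type*} (h : #α = aleph 1) :
    ∃ r : α → α → Prop, IsWellOrder α r ∧ ∀ a, {b | r b a}.Countable := by
  obtain ⟨r, hr, hord⟩ := exists_ord_eq α
  refine ⟨r, hr, fun a => ?_⟩
  have hlt : #{b | r b a} < aleph 1 := h ▸ card_typein_lt a hord
  rwa [← le_aleph0_iff_set_countable, ← Order.lt_succ_iff, succ_aleph0]

/-- If CH holds, there is a subset of the unit square all of whose horizontal sections are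
countable and all of whose vertical sections are co-countable in `[0,1]`. -/
theorem CH_implies_sierpinski_set (hCH : #ℝ = aleph 1) :
    ∃ S : Set (ℝ × ℝ), S ⊆ Set.Icc (0:ℝ) 1 ×ˢ Set.Icc (0:ℝ) 1 ∧
      (∀ y ∈ Set.Icc (0:ℝ) 1, {x ∈ Set.Icc (0:ℝ) 1 | (x, y) ∈ S}.Countable) ∧
      (∀ x ∈ Set.Icc (0:ℝ) 1, (Set.Icc (0:ℝ) 1 \ {y ∈ Set.Icc (0:ℝ) 1 | (x, y) ∈ S}).Countable) := by
  obtain ⟨r, hr, hc⟩ := exists_isWellOrder_countable_initialSegment hCH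
  refine ⟨{p | p ∈ Set.Icc (0:ℝ) 1 ×ˢ Set.Icc (0:ℝ) 1 ∧ r p.1 p.2}, fun p hp => hp.1,
    fun y _ => (hc y).mono fun x hx => hx.2.2,
    fun x hx => ((hc x).insert x).mono fun y hy => ?_⟩
  rcases trichotomous_of r x y with h | h | h
  · exact absurd ⟨hy.1, ⟨hx, hy.1⟩, h⟩ hy.2
  · exact Or.inl h.symm
  · exact Or.inr h
end
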